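/- Let G be a caterpillar with n vertices, diameter d, and spine P = {v_0, v_1, …, v_d}, and suppose at least two leaves of G outside P are adjacent to spine vertices among {v_2, v_3, …, v_{d−2}}. Then there exists a caterpillar G* with n vertices and diameter d such that T_mix(G*) > T_mix(G) and G* is either a double broom or a near double broom. -/

import Mathlib

/-!
For a tree with `m` edges, transmissions `W u = ∑ z, dist u z` and twice the Wiener index
`w = ∑ u, W u`, the hitting times are `H(u, z) = m * dist u z + W z - W u` (`hit_eq`): this function
solves the one-step equations, because exactly one neighbour of `u` is closer to `z`, and a
nonnegative solution of them is the hitting time (`hit_eq_of_harmonic`). Averaging over `π` gives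

`H(u, z) - H(π, z) = m * dist u z - W u - W z + w / m - 1 / 2`   (`hit_sub_hitPi`).

A vertex off the path from `u` to `z` forces a detour of length at least two, so in a tree of
diameter `d` the right-hand side is at most `w / m - 1 / 2 - 2 * m + d` (`Tmix_le`). The ends of the
spine of a caterpillar of diameter `d` attain this value (`le_Tmix_catGraph`). Thus, among
caterpillars with given order and diameter, a larger mixing time means a larger Wiener index.

The Wiener index is a convex function of the position of each single leaf along the spine, strictly
so at the positions `2, …, d - 2` (`exists_better`). A caterpillar on the given vertex set and spine
that maximizes it therefore has all its leaves at `v 1` and `v (d - 1)`, so it is a double broom,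
and it strictly beats `G`, which has a leaf at an interior position (`exists_extremal`).
-/

open scoped Classical

namespace RWMix

/-- The degree of a vertex. -/
noncomputable def deg {W : Type*} (G : SimpleGraph W) (v : W) : ℕ :=
  Nat.card {w // G.Adj v w}

/-- The number of edges of a graph. -/
noncomputable def numEdges {W : Type*} (G : SimpleGraph W) : ℕ :=
  Nat.card G.edgeSet

/-- Transition matrix of the simple random walk: from `u` move to each neighbor
with probability `1/deg u`. -/
noncomputable def step {V : Type*} [Fintype V] (G : SimpleGraph V) : Matrix V V ℝ :=
  Matrix.of fun u w => if G.Adj u w then ((deg G u : ℝ))⁻¹ else 0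

/-- The walk killed at `v` (rows at `v` are zeroed out). -/
noncomputable def killed {V : Type*} [Fintype V] (G : SimpleGraph V) (v : V) :
    Matrix V V ℝ :=
  Matrix.of fun u w => if u = v then 0 else step G u w

/-- Expected hitting time `H(u,v)`: the sum over `t ≥ 0` of the probability that the walk
started at `u` has not visited `v` through time `t`.  This equals the expectation of the
first hitting time of `v`, and `hit G u u = 0`. -/
noncomputable def hit {V : Type*} [Fintype V] [DecidableEq V]
    (G : SimpleGraph V) (u v : V) : ℝ :=
  ∑' t : ℕ, ∑ w : V, (killed G v ^ t) u w * (if w = v then (0 : ℝ) else 1)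

/-- The stationary distribution: `π v = deg v / (2 |E|)`. -/
noncomputable def statPr {V : Type*} [Fintype V] (G : SimpleGraph V) (v : V) : ℝ :=
  (deg G v : ℝ) / (2 * (numEdges G : ℝ))

/-- The access time `H(π, v) = ∑_u π_u H(u,v)`. -/
noncomputable def hitPi {V : Type*} [Fintype V] [DecidableEq V]
    (G : SimpleGraph V) (v : V) : ℝ :=
  ∑ u : V, statPr G u * hit G u v

/-- The mixing time from vertex `v`: `H(v,π) = max_w H(w,v) − H(π,v)`. -/
noncomputable def mixFrom {V : Type*} [Fintype V] [DecidableEq V]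
    (G : SimpleGraph V) (v : V) : ℝ :=
  (⨆ w : V, hit G w v) - hitPi G v

/-- The (exact) mixing time `T_mix(G) = max_v H(v,π)`. -/
noncomputable def Tmix {V : Type*} [Fintype V] [DecidableEq V]
    (G : SimpleGraph V) : ℝ :=
  ⨆ v : V, mixFrom G v

/-- Edges of the double broom, on vertex set `Fin (d+1) ⊕ Fin a ⊕ Fin b`:
the spine path `v_0, …, v_d`, extra left leaves attached to `v_1`,
and extra right leaves attached to `v_{d-1}`. -/
def broomRel (d : ℕ) {a b : ℕ} :
    (Fin (d+1) ⊕ Fin a ⊕ Fin b) → (Fin (d+1) ⊕ Fin a ⊕ Fin b) → Prop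
  | Sum.inl i, Sum.inl j => (i : ℕ) + 1 = (j : ℕ)
  | Sum.inr (Sum.inl _), Sum.inl j => (j : ℕ) = 1
  | Sum.inr (Sum.inr _), Sum.inl j => (j : ℕ) = d - 1
  | _, _ => False

/-- The double broom of diameter `d` with `ℓ` left leaves and `r` right leaves:
the diametral path is `v_0, …, v_d` (where `v_0` is one left leaf and `v_d` one right
leaf), together with `ℓ - 1` further pendant leaves at `v_1` and `r - 1` further pendant
leaves at `v_{d-1}`.  It has `d - 1 + ℓ + r` vertices. -/
def doubleBroom (d ℓ r : ℕ) :
    SimpleGraph (Fin (d+1) ⊕ Fin (ℓ-1) ⊕ Fin (r-1)) :=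
  SimpleGraph.fromRel (broomRel d)

/-- The balanced double broom `D_{n,d}`, with `ℓ = ⌈(n-d+1)/2⌉` and `r = ⌊(n-d+1)/2⌋`. -/
def balancedDB (n d : ℕ) :=
  doubleBroom d ((n - d + 2) / 2) ((n - d + 1) / 2)

/-- A leaf is a vertex of degree one. -/
def IsLeaf {W : Type*} (G : SimpleGraph W) (v : W) : Prop := deg G v = 1

/-- `v 0, v 1, …, v s` is a leaf-to-leaf path in `G`. -/
def IsLeafPath {W : Type*} (G : SimpleGraph W) (s : ℕ) (v : Fin (s+1) → W) : Prop :=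
  Function.Injective v ∧
  (∀ i : ℕ, ∀ h : i < s, G.Adj (v ⟨i, by omega⟩) (v ⟨i + 1, by omega⟩)) ∧
  IsLeaf G (v 0) ∧ IsLeaf G (v (Fin.last s))

/-- A caterpillar: every vertex is within distance one of a fixed leaf-to-leaf path
(the spine). -/
def IsCaterpillar {W : Type*} (G : SimpleGraph W) : Prop :=
  ∃ (s : ℕ) (v : Fin (s+1) → W), IsLeafPath G s v ∧ ∀ w, ∃ i, G.dist w (v i) ≤ 1

/-- Move the leaf `y` from its neighbor `a` to the new neighbor `b`:
delete the edge `{a,y}` and add the edge `{b,y}`. -/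
def moveLeaf {W : Type*} (G : SimpleGraph W) (a y b : W) : SimpleGraph W :=
  SimpleGraph.fromEdgeSet ((G.edgeSet \ {s(a, y)}) ∪ {s(b, y)})

/-- A graph is a double broom if it is isomorphic to some `doubleBroom d ℓ r`
with `ℓ, r ≥ 1`. -/
def IsDoubleBroom {W : Type*} (G : SimpleGraph W) : Prop :=
  ∃ (d ℓ r : ℕ), 1 ≤ ℓ ∧ 1 ≤ r ∧ Nonempty (G ≃g doubleBroom d ℓ r)

/-- A near double broom: not a double broom, but there is exactly one leaf whose
removal results in a double broom. -/
def IsNearDoubleBroom {W : Type*} (G : SimpleGraph W) : Prop :=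
  ¬ IsDoubleBroom G ∧
    ∃! x : W, IsLeaf G x ∧ IsDoubleBroom (G.induce {y | y ≠ x})

/-- `w` belongs to the set `V_k`: either `w = v k`, or `w` is a vertex off the spine
adjacent to `v k`. -/
def inVk {W : Type*} {d : ℕ} (G : SimpleGraph W) (v : Fin (d+1) → W)
    (k : Fin (d+1)) (w : W) : Prop :=
  w = v k ∨ ((∀ m, w ≠ v m) ∧ G.Adj (v k) w)


/-! ### Hitting times as solutions of the one-step equations -/

section Hitting

variable {V : Type*} [Fintype V]

/-- The killed walk has nonnegative transition weights in every number of steps. -/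
lemma killed_pow_nonneg [DecidableEq V] (G : SimpleGraph V) (v : V) (t : ℕ) (u w : V) :
    0 ≤ (killed G v ^ t) u w := by
  induction t generalizing u w with
  | zero =>
    rw [pow_zero, Matrix.one_apply]
    split_ifs <;> norm_num
  | succ k ih =>
    rw [pow_succ, Matrix.mul_apply]
    refine Finset.sum_nonneg fun z _ => mul_nonneg (ih u z) ?_
    simp only [killed, step, Matrix.of_apply]
    split_ifs <;> positivity

/-- A nonnegative solution of the one-step equations for the hitting time of `v` is the hitting
time: the partial sums of the series defining `hit` telescope to `h - Q ^ T h` with `Q` the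
killed transition matrix, and the remainder is dominated by a multiple of the `T`-th term. -/
lemma hit_eq_of_harmonic [DecidableEq V] (G : SimpleGraph V) (v : V) (h : V → ℝ)
    (hv : h v = 0) (hnn : ∀ u, 0 ≤ h u)
    (hh : ∀ u, u ≠ v → h u = 1 + ∑ w, step G u w * h w) (u : V) :
    hit G u v = h u := by
  set Q := killed G v with hQ
  set e : V → ℝ := fun w => if w = v then (0 : ℝ) else 1 with he
  have hQh : Q.mulVec h = h - e := by
    funext a
    simp only [Matrix.mulVec, dotProduct, Pi.sub_apply, hQ, killed, Matrix.of_apply, he]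
    by_cases ha : a = v
    · simp [ha, hv]
    · simp only [ha, if_false]
      linarith [hh a ha]
  have hterm : ∀ t : ℕ, (Q ^ t).mulVec e = (Q ^ t).mulVec h - (Q ^ (t + 1)).mulVec h := by
    intro t
    rw [pow_succ, ← Matrix.mulVec_mulVec, hQh, Matrix.mulVec_sub]
    abel
  have hpart : ∀ T : ℕ, ∑ t ∈ Finset.range T, (Q ^ t).mulVec e u
      = h u - (Q ^ T).mulVec h u := by
    intro T
    have h1 := Finset.sum_range_sub' (fun t => (Q ^ t).mulVec h u) T
    rw [pow_zero, Matrix.one_mulVec] at h1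
    rw [← h1]
    exact Finset.sum_congr rfl fun t _ => by rw [hterm]; rfl
  have hQnn : ∀ (f : V → ℝ), (∀ a, 0 ≤ f a) → ∀ T : ℕ, 0 ≤ (Q ^ T).mulVec f u :=
    fun f hf T => Finset.sum_nonneg fun a _ =>
      mul_nonneg (killed_pow_nonneg G v T u a) (hf a)
  have henn : ∀ a, 0 ≤ e a := fun a => by
    simp only [he]; split_ifs <;> norm_num
  have hsum : Summable fun t : ℕ => (Q ^ t).mulVec e u := by
    refine summable_of_sum_range_le (c := h u) (hQnn e henn) fun T => ?_
    rw [hpart]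
    linarith [hQnn h hnn T]
  have hle : ∀ T : ℕ, (Q ^ T).mulVec h u ≤ (∑ a, h a) * (Q ^ T).mulVec e u := by
    intro T
    simp only [Matrix.mulVec, dotProduct]
    rw [Finset.mul_sum]
    refine Finset.sum_le_sum fun a _ => ?_
    have h1 : h a ≤ (∑ b, h b) * e a := by
      by_cases ha : a = v
      · simp [ha, hv, he]
      · simp only [he, ha, if_false, mul_one]
        exact Finset.single_le_sum (fun b _ => hnn b) (Finset.mem_univ a)
    nlinarith [killed_pow_nonneg G v T u a]
  have hrem : Filter.Tendsto (fun T : ℕ => (Q ^ T).mulVec h u) Filter.atTop (nhds 0) := by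
    refine squeeze_zero (hQnn h hnn) hle ?_
    simpa using hsum.tendsto_atTop_zero.const_mul (∑ a, h a)
  have hhs : HasSum (fun t : ℕ => (Q ^ t).mulVec e u) (h u) := by
    rw [hsum.hasSum_iff_tendsto_nat]
    simp only [hpart]
    simpa using hrem.const_sub (h u)
  exact hhs.tsum_eq

lemma deg_eq_sum (G : SimpleGraph V) (u : V) :
    (deg G u : ℝ) = ∑ w, if G.Adj u w then (1 : ℝ) else 0 := by
  simp [deg, Nat.card_eq_fintype_card, Fintype.card_subtype]

lemma sum_deg (G : SimpleGraph V) : ∑ u, (deg G u : ℝ) = 2 * numEdges G := by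
  have h := G.sum_degrees_eq_twice_card_edges
  have h1 : ∀ u, G.degree u = deg G u := fun u => by
    rw [deg, Nat.card_eq_fintype_card, ← SimpleGraph.card_neighborSet_eq_degree]
    rfl
  have h2 : numEdges G = G.edgeFinset.card := by
    rw [numEdges, Nat.card_eq_fintype_card, SimpleGraph.edgeFinset_card]
  rw [h2]
  simp only [h1] at h
  exact_mod_cast h

end Hitting

/-! ### Hitting and mixing times of trees -/

section Tree

/-- In a tree, exactly one neighbour of `u` lies closer to `z ≠ u`; all others lie farther. -/
lemma exists_closer {V : Type*} {G : SimpleGraph V} (hG : G.IsTree) {u z : V} (huz : u ≠ z) :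
    ∃ w₀, G.Adj u w₀ ∧ G.dist w₀ z + 1 = G.dist u z ∧
      ∀ w, G.Adj u w → w ≠ w₀ → G.dist w z = G.dist u z + 1 := by
  obtain ⟨p, hp⟩ := hG.1.exists_walk_length_eq_dist u z
  cases p with
  | nil => exact absurd rfl huz
  | @cons _ w₀ _ h q =>
    have hlt : G.dist w₀ z + 1 = G.dist u z := by
      have h1 := SimpleGraph.dist_le q
      have h2 := hG.1.dist_triangle (u := u) (v := w₀) (w := z)
      rw [SimpleGraph.dist_eq_one_iff_adj.mpr h] at h2
      rw [SimpleGraph.Walk.length_cons] at hp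
      omega
    refine ⟨w₀, h, hlt, fun w hw hne => ?_⟩
    rcases hG.dist_eq_dist_add_one_of_adj z hw with h1 | h1
    · exfalso
      rw [SimpleGraph.dist_comm, SimpleGraph.dist_comm (u := z) (v := w)] at h1
      obtain ⟨r, hr⟩ := hG.1.exists_walk_length_eq_dist w z
      have hp1 := SimpleGraph.Walk.isPath_of_length_eq_dist _ hp
      have hp2 := SimpleGraph.Walk.isPath_of_length_eq_dist (SimpleGraph.Walk.cons hw r)
        (by rw [SimpleGraph.Walk.length_cons]; omega)
      have h3 := congrArg (fun s : G.Path u z => (s : G.Walk u z).snd)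
        ((SimpleGraph.isAcyclic_iff_subsingleton_path.mp hG.2 u z).elim ⟨_, hp1⟩ ⟨_, hp2⟩)
      simp at h3
      exact hne h3.symm
    · rw [SimpleGraph.dist_comm, h1, SimpleGraph.dist_comm]

variable {V : Type*} [Fintype V] {G : SimpleGraph V}

lemma numEdges_add_one (hG : G.IsTree) : numEdges G + 1 = Fintype.card V := by
  rw [← Nat.card_eq_fintype_card]
  exact (SimpleGraph.isTree_iff_connected_and_card.mp hG).2

lemma sum_nbr (hG : G.IsTree) (φ : ℕ → ℝ) {u z : V} (huz : u ≠ z) :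
    ∑ w, (if G.Adj u w then φ (G.dist w z) else 0)
      = ((deg G u : ℝ) - 1) * φ (G.dist u z + 1) + φ (G.dist u z - 1) := by
  obtain ⟨w₀, h0, h1, h2⟩ := exists_closer hG huz
  have : ∀ w, (if G.Adj u w then φ (G.dist w z) else 0)
      = (if G.Adj u w then (1 : ℝ) else 0) * φ (G.dist u z + 1)
        + (if w = w₀ then φ (G.dist u z - 1) - φ (G.dist u z + 1) else 0) := by
    intro w
    by_cases hw : w = w₀
    · subst hw
      simp [h0, ← h1]
    · by_cases ha : G.Adj u w
      · simp [ha, hw, h2 w ha hw]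
      · simp [ha, hw]
  simp only [this]
  rw [Finset.sum_add_distrib, ← Finset.sum_mul, ← deg_eq_sum, Finset.sum_ite_eq' Finset.univ w₀]
  simp
  ring

lemma sum_nbr_self (φ : ℕ → ℝ) (z : V) :
    ∑ w, (if G.Adj z w then φ (G.dist w z) else 0) = (deg G z : ℝ) * φ 1 := by
  rw [deg_eq_sum, Finset.sum_mul]
  refine Finset.sum_congr rfl fun w _ => ?_
  split_ifs with h
  · rw [SimpleGraph.dist_comm, SimpleGraph.dist_eq_one_iff_adj.mpr h, one_mul]
  · simp

/-- The total distance (transmission) of the vertex `u`. -/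
noncomputable def transm (G : SimpleGraph V) (u : V) : ℝ := ∑ z, (G.dist u z : ℝ)

/-- Twice the Wiener index: the sum of the distances over all ordered pairs of vertices. -/
noncomputable def wiener2 (G : SimpleGraph V) : ℝ := ∑ u, transm G u

lemma sum_deg_dist (hG : G.IsTree) (z : V) :
    ∑ u, (deg G u : ℝ) * G.dist u z = 2 * transm G z - numEdges G := by
  -- Evaluate the sum of `dist w z ^ 2` over ordered pairs of adjacent vertices in both orders.
  have h1 : ∑ u, ∑ w, (if G.Adj u w then ((G.dist w z : ℕ) : ℝ) ^ 2 else 0)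
      = ∑ u, ((deg G u : ℝ) * (G.dist u z + 1) ^ 2 - 4 * G.dist u z) := by
    refine Finset.sum_congr rfl fun u _ => ?_
    by_cases hu : u = z
    · subst hu
      rw [sum_nbr_self (fun k => (k : ℝ) ^ 2)]
      simp
    · rw [sum_nbr hG (fun k => (k : ℝ) ^ 2) hu]
      have hpos : 1 ≤ G.dist u z := hG.1.pos_dist_of_ne hu
      push_cast [hpos]
      ring
  have h2 : ∑ u, ∑ w, (if G.Adj u w then ((G.dist w z : ℕ) : ℝ) ^ 2 else 0)
      = ∑ w, (deg G w : ℝ) * (G.dist w z : ℝ) ^ 2 := by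
    rw [Finset.sum_comm]
    refine Finset.sum_congr rfl fun w _ => ?_
    rw [deg_eq_sum, Finset.sum_mul]
    refine Finset.sum_congr rfl fun u _ => ?_
    simp [G.adj_comm u w]
  have h3 : ∑ u, ((deg G u : ℝ) * (G.dist u z + 1) ^ 2 - 4 * G.dist u z)
      = ∑ u, (deg G u : ℝ) * (G.dist u z : ℝ) ^ 2
        + 2 * ∑ u, (deg G u : ℝ) * G.dist u z + ∑ u, (deg G u : ℝ) - 4 * transm G z := by
    simp only [transm, Finset.mul_sum, ← Finset.sum_add_distrib, ← Finset.sum_sub_distrib,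
      G.dist_comm (u := z)]
    exact Finset.sum_congr rfl fun u _ => by ring
  rw [sum_deg] at h3
  linarith

lemma sum_nbr_transm (hG : G.IsTree) (u : V) :
    ∑ w, (if G.Adj u w then transm G w else 0)
      = (deg G u : ℝ) * transm G u + (numEdges G + 1) * deg G u - 2 * numEdges G := by
  have h1 : ∑ w, (if G.Adj u w then transm G w else 0)
      = ∑ z, ∑ w, (if G.Adj u w then ((G.dist w z : ℕ) : ℝ) else 0) := by
    rw [Finset.sum_comm]
    refine Finset.sum_congr rfl fun w _ => ?_
    split_ifs <;> simp [transm]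
  have h2 : ∀ z, ∑ w, (if G.Adj u w then ((G.dist w z : ℕ) : ℝ) else 0)
      = (deg G u : ℝ) * (G.dist u z) + (deg G u - 2) + (if z = u then 2 else 0) := by
    intro z
    by_cases hu : u = z
    · subst hu
      rw [sum_nbr_self (fun k => (k : ℝ))]
      simp
    · rw [sum_nbr hG (fun k => (k : ℝ)) hu]
      have hpos : 1 ≤ G.dist u z := hG.1.pos_dist_of_ne hu
      rw [if_neg (Ne.symm hu)]
      push_cast [hpos]
      ring
  rw [h1]
  simp only [h2]
  rw [Finset.sum_add_distrib, Finset.sum_add_distrib, ← Finset.mul_sum,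
    Finset.sum_ite_eq' Finset.univ u]
  have hn : (Fintype.card V : ℝ) = numEdges G + 1 := by
    exact_mod_cast (numEdges_add_one hG).symm
  simp only [Finset.sum_const, Finset.card_univ, nsmul_eq_mul, hn, Finset.mem_univ, if_true]
  simp only [transm]
  ring

lemma transm_sub_le (hG : G.IsTree) (u z : V) :
    transm G u - transm G z ≤ numEdges G * G.dist u z := by
  have hn : (Fintype.card V : ℝ) = numEdges G + 1 := by
    exact_mod_cast (numEdges_add_one hG).symm
  have hle : ∀ y, (G.dist u y : ℝ) - G.dist z y
      ≤ G.dist u z - (if y = u then (G.dist u z : ℝ) else 0) := by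
    intro y
    split_ifs with h
    · subst h
      simp
    · have := hG.1.dist_triangle (u := u) (v := z) (w := y)
      have : (G.dist u y : ℝ) ≤ G.dist u z + G.dist z y := by exact_mod_cast this
      linarith
  have := Finset.sum_le_sum fun y (_ : y ∈ Finset.univ) => hle y
  rw [Finset.sum_sub_distrib, Finset.sum_sub_distrib, Finset.sum_ite_eq' Finset.univ u] at this
  simp only [Finset.sum_const, Finset.card_univ, nsmul_eq_mul, hn, Finset.mem_univ, if_true]
    at this
  simp only [transm]
  linarith

lemma hit_eq [DecidableEq V] (hG : G.IsTree) (u z : V) :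
    hit G u z = numEdges G * G.dist u z + transm G z - transm G u := by
  refine hit_eq_of_harmonic G z
    (fun u => numEdges G * G.dist u z + transm G z - transm G u) (by simp) (fun u => ?_)
    (fun u hu => ?_) u
  · have := transm_sub_le hG u z
    linarith
  · have h1 : ∑ w, step G u w * (numEdges G * G.dist w z + transm G z - transm G w)
        = (deg G u : ℝ)⁻¹ * (numEdges G * ∑ w, (if G.Adj u w then ((G.dist w z : ℕ) : ℝ) else 0)
          + transm G z * ∑ w, (if G.Adj u w then (1 : ℝ) else 0)
          - ∑ w, (if G.Adj u w then transm G w else 0)) := by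
      simp only [Finset.mul_sum, ← Finset.sum_add_distrib, ← Finset.sum_sub_distrib]
      refine Finset.sum_congr rfl fun w _ => ?_
      simp only [step, Matrix.of_apply]
      split_ifs <;> ring
    have hdeg : (deg G u : ℝ) ≠ 0 := by
      obtain ⟨w₀, h0, -, -⟩ := exists_closer hG hu
      have : 0 < deg G u := Nat.card_pos_iff.mpr ⟨⟨⟨w₀, h0⟩⟩, inferInstance⟩
      exact_mod_cast this.ne'
    have hpos : 1 ≤ G.dist u z := hG.1.pos_dist_of_ne hu
    simp only [h1, sum_nbr_transm hG, ← deg_eq_sum, sum_nbr hG (fun k => (k : ℝ)) hu]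
    push_cast [hpos]
    field_simp
    ring

/-- For a tree, the difference `H(u, z) - H(π, z)` is a symmetric function of `u` and `z`. -/
lemma hit_sub_hitPi [DecidableEq V] (hG : G.IsTree) (hm : 0 < numEdges G) (u z : V) :
    hit G u z - hitPi G z = numEdges G * G.dist u z - transm G u - transm G z
      + wiener2 G / numEdges G - 1 / 2 := by
  have hm' : (numEdges G : ℝ) ≠ 0 := by exact_mod_cast hm.ne'
  have hn : (Fintype.card V : ℝ) = numEdges G + 1 := by
    exact_mod_cast (numEdges_add_one hG).symm
  have h1 : ∑ u, (deg G u : ℝ) * transm G u = 2 * wiener2 G - (numEdges G + 1) * numEdges G := by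
    simp only [transm, Finset.mul_sum]
    rw [Finset.sum_comm]
    simp only [sum_deg_dist hG, Finset.sum_sub_distrib, ← Finset.mul_sum, wiener2,
      Finset.sum_const, Finset.card_univ, nsmul_eq_mul, hn]
  have h2 : hitPi G z = (2 * (numEdges G : ℝ))⁻¹ *
      (numEdges G * ∑ u, (deg G u : ℝ) * G.dist u z + transm G z * ∑ u, (deg G u : ℝ)
        - ∑ u, (deg G u : ℝ) * transm G u) := by
    simp only [Finset.mul_sum, ← Finset.sum_add_distrib, ← Finset.sum_sub_distrib, hitPi]
    refine Finset.sum_congr rfl fun w _ => ?_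
    rw [hit_eq hG, statPr]
    ring
  rw [h2, hit_eq hG, h1, sum_deg, sum_deg_dist hG]
  field_simp
  ring

/-- The vertices outside the path between `u` and `w` each force a detour of length at least two,
and that path has `dist u w + 1` vertices. -/
lemma transm_add_ge (hG : G.IsTree) (u w : V) :
    (numEdges G : ℝ) * G.dist u w + 2 * numEdges G ≤
      transm G u + transm G w + G.dist u w := by
  obtain ⟨p, hp⟩ := hG.1.exists_walk_length_eq_dist u w
  have hpp := SimpleGraph.Walk.isPath_of_length_eq_dist p hp
  have hcard : p.support.toFinset.card = G.dist u w + 1 := by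
    rw [List.toFinset_card_of_nodup hpp.support_nodup, SimpleGraph.Walk.length_support, hp]
  have hle : ∀ y, (G.dist u w : ℝ) + 2 - (if y ∈ p.support.toFinset then 2 else 0)
      ≤ G.dist u y + G.dist w y := by
    intro y
    have htri := hG.1.dist_triangle (u := u) (v := y) (w := w)
    rw [G.dist_comm (u := w) (v := y)]
    split_ifs with hy
    · have : (G.dist u w : ℝ) ≤ G.dist u y + G.dist y w := by exact_mod_cast htri
      linarith
    · obtain ⟨q, hq⟩ := hG.1.exists_walk_length_eq_dist u y
      obtain ⟨r, hr⟩ := hG.1.exists_walk_length_eq_dist y w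
      obtain ⟨c⟩ := hG.colorable_two
      -- Both walks from `u` to `w` have the same parity, because a tree is bipartite.
      let b : G.Coloring Bool := (SimpleGraph.recolorOfEquiv G finTwoEquiv) c
      have e1 := b.even_length_iff_congr p
      have e2 := b.even_length_iff_congr (q.append r)
      rw [← e1, SimpleGraph.Walk.length_append, hp, hq, hr] at e2
      have hne : G.dist u y + G.dist y w ≠ G.dist u w := by
        intro heq
        have hp2 := SimpleGraph.Walk.isPath_of_length_eq_dist (q.append r)
          (by rw [SimpleGraph.Walk.length_append]; omega)
        have h3 := congrArg (fun s : G.Path u w => (s : G.Walk u w).support)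
          ((SimpleGraph.isAcyclic_iff_subsingleton_path.mp hG.2 u w).elim ⟨_, hpp⟩ ⟨_, hp2⟩)
        simp only at h3
        apply hy
        rw [h3, List.mem_toFinset, SimpleGraph.Walk.mem_support_append_iff]
        exact Or.inl q.end_mem_support
      have : G.dist u w + 2 ≤ G.dist u y + G.dist y w := by
        rw [Nat.even_iff, Nat.even_iff] at e2
        omega
      have : (G.dist u w : ℝ) + 2 ≤ G.dist u y + G.dist y w := by exact_mod_cast this
      linarith
  have hn : (Fintype.card V : ℝ) = numEdges G + 1 := by
    exact_mod_cast (numEdges_add_one hG).symm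
  have hs := Finset.sum_le_sum fun y (_ : y ∈ Finset.univ) => hle y
  simp only [Finset.sum_sub_distrib, Finset.sum_add_distrib, Finset.sum_ite_mem,
    Finset.univ_inter, Finset.sum_const, hcard, Finset.card_univ, nsmul_eq_mul, hn] at hs
  push_cast at hs
  simp only [transm]
  linarith

/-- Every tree of diameter at most `d` satisfies this bound, with equality for caterpillars of
diameter `d`. -/
lemma Tmix_le [DecidableEq V] (hG : G.IsTree) (hm : 0 < numEdges G) {d : ℕ}
    (hd : ∀ u w, G.dist u w ≤ d) :
    Tmix G ≤ wiener2 G / numEdges G - 1 / 2 - 2 * numEdges G + d := by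
  have := hG.1.nonempty
  refine ciSup_le fun z => ?_
  rw [mixFrom, sub_le_iff_le_add]
  refine ciSup_le fun u => ?_
  have h1 := hit_sub_hitPi hG hm u z
  have h2 := transm_add_ge hG u z
  have h3 : (G.dist u z : ℝ) ≤ d := by exact_mod_cast hd u z
  linarith

lemma le_Tmix [DecidableEq V] (G : SimpleGraph V) (u z : V) :
    hit G u z - hitPi G z ≤ Tmix G := by
  have h1 : hit G u z ≤ ⨆ w, hit G w z :=
    le_ciSup (f := fun w => hit G w z) (Set.finite_range _).bddAbove u
  have h2 : mixFrom G z ≤ Tmix G :=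
    le_ciSup (f := fun w => mixFrom G w) (Set.finite_range _).bddAbove z
  rw [mixFrom] at h2
  linarith

end Tree

/-! ### Caterpillars with a prescribed spine -/

section Caterpillar

variable {V : Type*} {d : ℕ}

/-- The number of edges (`0` or `1`) between `w` and the spine `v`. -/
noncomputable def offSpine (v : Fin (d + 1) → V) (w : V) : ℕ :=
  if w ∈ Set.range v then 0 else 1

/-- `p` encodes a caterpillar with spine `v`: a spine vertex is sent to its own index, and a
vertex off the spine to the index, different from `0` and `d`, of the spine vertex it hangs on. -/
structure IsAttach (v : Fin (d + 1) → V) (p : V → Fin (d + 1)) : Prop where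
  spine : ∀ i, p (v i) = i
  pos : ∀ w, w ∉ Set.range v → 1 ≤ (p w : ℕ)
  lt : ∀ w, w ∉ Set.range v → (p w : ℕ) < d

/-- The distance in the caterpillar with spine `v` and attachment `p`. The truncated differences
add up to `|p a - p b|`. -/
noncomputable def catDist (v : Fin (d + 1) → V) (p : V → Fin (d + 1)) (a b : V) : ℕ :=
  if a = b then 0 else
    ((p a : ℕ) - p b) + ((p b : ℕ) - p a) + offSpine v a + offSpine v b

/-- The parent of a vertex when the caterpillar is rooted at `v 0`. The truncated subtraction
makes the root its own parent. -/
noncomputable def par (v : Fin (d + 1) → V) (p : V → Fin (d + 1)) (w : V) : V :=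
  if w ∈ Set.range v then v ⟨(p w : ℕ) - 1, by omega⟩ else v (p w)

/-- The caterpillar with spine `v` and attachment `p`. The loop of the root at itself is
discarded by `SimpleGraph.fromRel`. -/
noncomputable def catGraph (v : Fin (d + 1) → V) (p : V → Fin (d + 1)) : SimpleGraph V :=
  SimpleGraph.fromRel fun a b => par v p a = b

lemma offSpine_spine (v : Fin (d + 1) → V) (i : Fin (d + 1)) : offSpine v (v i) = 0 := by
  simp [offSpine]

lemma offSpine_off {v : Fin (d + 1) → V} {w : V} (hw : w ∉ Set.range v) : offSpine v w = 1 := by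
  rw [offSpine, if_neg hw]

variable {v : Fin (d + 1) → V} {p : V → Fin (d + 1)}

lemma par_spine (hp : IsAttach v p) (i : Fin (d + 1)) :
    par v p (v i) = v ⟨(i : ℕ) - 1, by omega⟩ := by
  simp [par, hp.spine]

lemma par_off {w : V} (hw : w ∉ Set.range v) : par v p w = v (p w) := by
  rw [par, if_neg hw]

section Upper

variable {G : SimpleGraph V}

lemma reachable_spine
    (hs : ∀ i : ℕ, ∀ h : i < d, G.Adj (v ⟨i, by omega⟩) (v ⟨i + 1, by omega⟩))
    (i : ℕ) (hi : i < d + 1) : G.Reachable (v 0) (v ⟨i, hi⟩) := by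
  induction i with
  | zero => exact SimpleGraph.Reachable.refl _
  | succ k ih => exact (ih (by omega)).trans (hs k (by omega)).reachable

lemma connected_of_spine
    (hs : ∀ i : ℕ, ∀ h : i < d, G.Adj (v ⟨i, by omega⟩) (v ⟨i + 1, by omega⟩))
    (ho : ∀ w, w ∉ Set.range v → G.Adj (v (p w)) w) : G.Connected := by
  rw [SimpleGraph.connected_iff_exists_forall_reachable]
  refine ⟨v 0, fun w => ?_⟩
  by_cases hw : w ∈ Set.range v
  · obtain ⟨i, rfl⟩ := hw
    exact reachable_spine hs i i.2
  · exact (reachable_spine hs (p w) (p w).2).trans (ho w hw).reachable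

lemma dist_spine_le (hc : G.Connected)
    (hs : ∀ i : ℕ, ∀ h : i < d, G.Adj (v ⟨i, by omega⟩) (v ⟨i + 1, by omega⟩))
    (i k : ℕ) (h : i + k < d + 1) : G.dist (v ⟨i, by omega⟩) (v ⟨i + k, h⟩) ≤ k := by
  induction k with
  | zero => simp
  | succ k ih =>
    have h1 := ih (by omega)
    have h2 := SimpleGraph.dist_eq_one_iff_adj.mpr (hs (i + k) (by omega))
    have h3 := hc.dist_triangle (u := v ⟨i, by omega⟩) (v := v ⟨i + k, by omega⟩)
      (w := v ⟨i + k + 1, h⟩)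
    simp only [← add_assoc]
    omega

lemma dist_spine_le' (hc : G.Connected)
    (hs : ∀ i : ℕ, ∀ h : i < d, G.Adj (v ⟨i, by omega⟩) (v ⟨i + 1, by omega⟩))
    (i j : Fin (d + 1)) : G.dist (v i) (v j) ≤ ((i : ℕ) - j) + ((j : ℕ) - i) := by
  obtain ⟨i, hi⟩ := i
  obtain ⟨j, hj⟩ := j
  simp only
  rcases le_total i j with h | h
  · obtain ⟨k, rfl⟩ := Nat.exists_eq_add_of_le h
    have := dist_spine_le hc hs i k hj
    omega
  · obtain ⟨k, rfl⟩ := Nat.exists_eq_add_of_le h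
    have := dist_spine_le hc hs j k hi
    rw [SimpleGraph.dist_comm]
    omega

lemma dist_to_spine_le (hp : IsAttach v p) (ho : ∀ w, w ∉ Set.range v → G.Adj (v (p w)) w)
    (w : V) : G.dist w (v (p w)) ≤ offSpine v w := by
  by_cases hw : w ∈ Set.range v
  · obtain ⟨i, rfl⟩ := hw
    simp [hp.spine]
  · rw [offSpine_off hw, SimpleGraph.dist_comm, SimpleGraph.dist_eq_one_iff_adj.mpr (ho w hw)]

/-- Only the edges prescribed by `p` are needed for this bound: the graph may have others. -/
lemma dist_le_catDist (hc : G.Connected) (hp : IsAttach v p)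
    (hs : ∀ i : ℕ, ∀ h : i < d, G.Adj (v ⟨i, by omega⟩) (v ⟨i + 1, by omega⟩))
    (ho : ∀ w, w ∉ Set.range v → G.Adj (v (p w)) w) (a b : V) :
    G.dist a b ≤ catDist v p a b := by
  rw [catDist]
  split_ifs with h
  · simp [h]
  · have h1 := hc.dist_triangle (u := a) (v := v (p a)) (w := b)
    have h2 := hc.dist_triangle (u := v (p a)) (v := v (p b)) (w := b)
    have h3 := dist_to_spine_le hp ho a
    have h4 := dist_to_spine_le hp ho b
    have h5 := dist_spine_le' hc hs (p a) (p b)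
    rw [SimpleGraph.dist_comm] at h4
    omega

end Upper

lemma catDist_le (hp : IsAttach v p) (a b : V) : catDist v p a b ≤ d := by
  have key : ∀ w, offSpine v w = 0 ∨ (offSpine v w = 1 ∧ 1 ≤ (p w : ℕ) ∧ (p w : ℕ) < d) := by
    intro w
    by_cases hw : w ∈ Set.range v
    · exact Or.inl (by rw [offSpine, if_pos hw])
    · exact Or.inr ⟨offSpine_off hw, hp.pos w hw, hp.lt w hw⟩
  have h1 := key a
  have h2 := key b
  have h3 := (p a).2
  have h4 := (p b).2
  rw [catDist]
  split_ifs <;> omega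

lemma catGraph_adj_spine (hv : Function.Injective v) (hp : IsAttach v p) (i : ℕ) (h : i < d) :
    (catGraph v p).Adj (v ⟨i, by omega⟩) (v ⟨i + 1, by omega⟩) := by
  rw [catGraph, SimpleGraph.fromRel_adj]
  refine ⟨fun he => ?_, Or.inr ?_⟩
  · have := hv he
    simp at this
  · rw [par_spine hp]
    simp

lemma catGraph_adj_off (w : V) (hw : w ∉ Set.range v) : (catGraph v p).Adj (v (p w)) w := by
  rw [catGraph, SimpleGraph.fromRel_adj]
  refine ⟨fun he => hw ⟨_, he⟩, Or.inr ?_⟩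
  rw [par_off hw]

lemma catGraph_connected (hv : Function.Injective v) (hp : IsAttach v p) :
    (catGraph v p).Connected :=
  connected_of_spine (catGraph_adj_spine hv hp) catGraph_adj_off

/-- Every edge joins a vertex other than the root to its parent, so there are fewer edges than
vertices. -/
lemma catGraph_isTree [Fintype V] (hv : Function.Injective v) (hp : IsAttach v p) :
    (catGraph v p).IsTree := by
  have hc := catGraph_connected hv hp
  rw [SimpleGraph.isTree_iff_connected_and_card]
  refine ⟨hc, le_antisymm ?_ hc.card_vert_le_card_edgeSet_add_one⟩
  have hroot : par v p (v 0) = v 0 := by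
    rw [par_spine hp]
    rfl
  have hsub : (catGraph v p).edgeFinset ⊆
      (Finset.univ.erase (v 0)).image (fun w => s(w, par v p w)) := by
    intro e he
    rw [SimpleGraph.mem_edgeFinset] at he
    induction e with
    | h a b =>
      rw [SimpleGraph.mem_edgeSet, catGraph, SimpleGraph.fromRel_adj] at he
      obtain ⟨hne, h | h⟩ := he
      · refine Finset.mem_image.mpr ⟨a, Finset.mem_erase.mpr ⟨?_, Finset.mem_univ _⟩, by rw [h]⟩
        rintro rfl
        exact hne (hroot.symm.trans h)
      · refine Finset.mem_image.mpr
          ⟨b, Finset.mem_erase.mpr ⟨?_, Finset.mem_univ _⟩, by rw [h, Sym2.eq_swap]⟩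
        rintro rfl
        exact hne (hroot.symm.trans h).symm
  have h1 := (Finset.card_le_card hsub).trans Finset.card_image_le
  rw [Finset.card_erase_of_mem (Finset.mem_univ _), Finset.card_univ] at h1
  have h2 : 0 < Fintype.card V := Fintype.card_pos_iff.mpr ⟨v 0⟩
  rw [Nat.card_eq_fintype_card, Nat.card_eq_fintype_card, ← SimpleGraph.edgeFinset_card]
  omega

/-- A function vanishing at `b` that drops by at most one along each edge is a lower bound for
the distance to `b`. -/
lemma le_dist_of_lipschitz {G : SimpleGraph V} (hc : G.Connected) (b : V) (f : V → ℕ)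
    (hb : f b = 0) (hf : ∀ a a', G.Adj a a' → f a ≤ f a' + 1) (a : V) : f a ≤ G.dist a b := by
  obtain ⟨q, hq⟩ := hc.exists_walk_length_eq_dist a b
  rw [← hq]
  clear hq
  induction q with
  | nil => simp [hb]
  | cons h q ih =>
    have := hf _ _ h
    have := ih hb
    rw [SimpleGraph.Walk.length_cons]
    omega

lemma catGraph_dist (hv : Function.Injective v) (hp : IsAttach v p) (a b : V) :
    (catGraph v p).dist a b = catDist v p a b := by
  have hc := catGraph_connected hv hp
  refine le_antisymm
    (dist_le_catDist hc hp (catGraph_adj_spine hv hp) catGraph_adj_off a b) ?_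
  refine le_dist_of_lipschitz hc b (fun w => catDist v p w b) (by simp [catDist]) ?_ a
  have key : ∀ w, w ≠ par v p w → catDist v p w b ≤ catDist v p (par v p w) b + 1 ∧
      catDist v p (par v p w) b ≤ catDist v p w b + 1 := by
    intro w hne
    have hw : (offSpine v w = 0 ∧ offSpine v (par v p w) = 0 ∧
          (p w : ℕ) ≤ p (par v p w) + 1 ∧ (p (par v p w) : ℕ) ≤ p w) ∨
        (offSpine v w = 1 ∧ offSpine v (par v p w) = 0 ∧ p (par v p w) = p w) := by
      by_cases hw : w ∈ Set.range v
      · obtain ⟨i, rfl⟩ := hw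
        left
        rw [par_spine hp, offSpine_spine, offSpine_spine, hp.spine, hp.spine]
        refine ⟨rfl, rfl, ?_, ?_⟩ <;> simp only <;> omega
      · right
        rw [par_off hw, offSpine_spine, offSpine_off hw, hp.spine]
        exact ⟨rfl, rfl, rfl⟩
    by_cases h1 : w = b
    · subst h1
      simp only [catDist, if_neg hne.symm, if_true]
      omega
    · by_cases h2 : par v p w = b
      · rw [h2] at hw
        simp only [catDist, h2, if_neg h1, if_true]
        omega
      · simp only [catDist, if_neg h1, if_neg h2]
        omega
  intro a a' haa
  rw [catGraph, SimpleGraph.fromRel_adj] at haa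
  obtain ⟨hne, rfl | rfl⟩ := haa
  · exact (key a hne).1
  · exact (key a' hne.symm).2

lemma catGraph_diam [Finite V] (hv : Function.Injective v) (hp : IsAttach v p) :
    (catGraph v p).diam = d := by
  have hc := catGraph_connected hv hp
  have := hc.nonempty
  refine le_antisymm ?_ ?_
  · obtain ⟨a, b, hab⟩ := (catGraph v p).exists_dist_eq_diam
    rw [← hab, catGraph_dist hv hp]
    exact catDist_le hp a b
  · have h1 := SimpleGraph.dist_le_diam (u := v 0) (v := v (Fin.last d))
      (SimpleGraph.connected_iff_ediam_ne_top.mp hc)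
    rw [catGraph_dist hv hp, catDist] at h1
    split_ifs at h1 with h
    · have := congrArg Fin.val (hv h)
      simp at this
      omega
    · simp only [hp.spine] at h1
      simp at h1
      omega

lemma isLeaf_of_unique {W : Type*} {G : SimpleGraph W} {a b : W} (h : G.Adj a b)
    (hu : ∀ w, G.Adj a w → w = b) : IsLeaf G a := by
  rw [IsLeaf, deg, Nat.card_eq_one_iff_unique]
  exact ⟨⟨fun x y => Subtype.ext ((hu x x.2).trans (hu y y.2).symm)⟩, ⟨⟨b, h⟩⟩⟩

lemma IsLeaf.unique {W : Type*} {G : SimpleGraph W} {a b c : W} (h : IsLeaf G a)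
    (hb : G.Adj a b) (hc : G.Adj a c) : b = c := by
  rw [IsLeaf, deg, Nat.card_eq_one_iff_unique] at h
  have := h.1
  exact congrArg Subtype.val (Subsingleton.elim (⟨b, hb⟩ : {w // G.Adj a w}) ⟨c, hc⟩)

lemma catGraph_isLeafPath (hv : Function.Injective v) (hp : IsAttach v p) (hd : 1 ≤ d) :
    IsLeafPath (catGraph v p) d v := by
  have hs := catGraph_adj_spine hv hp
  refine ⟨hv, hs, ?_, ?_⟩
  · refine isLeaf_of_unique (hs 0 hd) fun w hw => ?_
    rw [catGraph, SimpleGraph.fromRel_adj] at hw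
    obtain ⟨hne, h | h⟩ := hw
    · rw [par_spine hp] at h
      exact absurd h hne
    · by_cases hr : w ∈ Set.range v
      · obtain ⟨j, rfl⟩ := hr
        rw [par_spine hp] at h
        have h1 := congrArg Fin.val (hv h)
        have h2 : (j : ℕ) ≠ 0 := fun h0 => hne (congrArg v (Fin.ext h0.symm))
        simp at h1
        exact congrArg v (Fin.ext (by simp only; omega))
      · rw [par_off hr] at h
        have h1 := congrArg Fin.val (hv h)
        have h2 := hp.pos w hr
        rw [h1] at h2
        simp at h2
  · have hlast : (catGraph v p).Adj (v (Fin.last d)) (v ⟨d - 1, by omega⟩) := by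
      have h1 := (hs (d - 1) (by omega)).symm
      have h2 : (⟨d - 1 + 1, by omega⟩ : Fin (d + 1)) = Fin.last d :=
        Fin.ext (Nat.sub_add_cancel hd)
      rwa [h2] at h1
    refine isLeaf_of_unique hlast fun w hw => ?_
    rw [catGraph, SimpleGraph.fromRel_adj] at hw
    obtain ⟨hne, h | h⟩ := hw
    · rw [par_spine hp] at h
      exact h.symm
    · exfalso
      by_cases hr : w ∈ Set.range v
      · obtain ⟨j, rfl⟩ := hr
        rw [par_spine hp] at h
        have h1 := congrArg Fin.val (hv h)
        simp at h1
        omega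
      · rw [par_off hr] at h
        have h1 := congrArg Fin.val (hv h)
        have h2 := hp.lt w hr
        simp at h1
        omega

lemma catGraph_isCaterpillar (hv : Function.Injective v) (hp : IsAttach v p) (hd : 1 ≤ d) :
    IsCaterpillar (catGraph v p) := by
  refine ⟨d, v, catGraph_isLeafPath hv hp hd, fun w => ⟨p w, ?_⟩⟩
  refine (dist_to_spine_le hp catGraph_adj_off w).trans ?_
  rw [offSpine]
  split_ifs <;> norm_num

/-! ### Maximizing the Wiener index of a caterpillar -/

/-- The sum of the caterpillar distances over all ordered pairs of vertices. -/
noncomputable def catWiener [Fintype V] (v : Fin (d + 1) → V) (p : V → Fin (d + 1)) : ℕ :=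
  ∑ a, ∑ b, catDist v p a b

lemma wiener2_catGraph [Fintype V] (hv : Function.Injective v) (hp : IsAttach v p) :
    wiener2 (catGraph v p) = catWiener v p := by
  simp [wiener2, transm, catWiener, catGraph_dist hv hp]

lemma wiener2_le [Fintype V] {G : SimpleGraph V} (hc : G.Connected) (hp : IsAttach v p)
    (hs : ∀ i : ℕ, ∀ h : i < d, G.Adj (v ⟨i, by omega⟩) (v ⟨i + 1, by omega⟩))
    (ho : ∀ w, w ∉ Set.range v → G.Adj (v (p w)) w) :
    wiener2 G ≤ catWiener v p := by
  have : ∑ a, ∑ b, G.dist a b ≤ catWiener v p :=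
    Finset.sum_le_sum fun a _ => Finset.sum_le_sum fun b _ => dist_le_catDist hc hp hs ho a b
  simp only [wiener2, transm]
  exact_mod_cast this

lemma isAttach_update [DecidableEq V] (hp : IsAttach v p) {x : V} (hx : x ∉ Set.range v)
    {t : Fin (d + 1)} (h1 : 1 ≤ (t : ℕ)) (h2 : (t : ℕ) < d) :
    IsAttach v (Function.update p x t) := by
  refine ⟨fun i => ?_, fun w hw => ?_, fun w hw => ?_⟩
  · rw [Function.update_of_ne (fun h => hx ⟨i, h⟩)]
    exact hp.spine i
  · by_cases h : w = x
    · rw [h, Function.update_self]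
      exact h1
    · rw [Function.update_of_ne h]
      exact hp.pos w hw
  · by_cases h : w = x
    · rw [h, Function.update_self]
      exact h2
    · rw [Function.update_of_ne h]
      exact hp.lt w hw

/-- As a function of the position of one leaf the Wiener index is convex, and strictly so at an
interior position: the distance to the spine vertex carrying the leaf has a kink there. Hence
moving the leaf by one step, in one of the two directions, increases it. -/
lemma exists_better [Fintype V] [DecidableEq V] (hp : IsAttach v p) {x : V}
    (hx : x ∉ Set.range v) (h1 : 2 ≤ (p x : ℕ)) (h2 : (p x : ℕ) + 2 ≤ d) :
    ∃ p', IsAttach v p' ∧ catWiener v p < catWiener v p' := by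
  set s : Fin (d + 1) := ⟨(p x : ℕ) + 1, by omega⟩ with hs
  set t : Fin (d + 1) := ⟨(p x : ℕ) - 1, by omega⟩ with ht
  have hsv : (s : ℕ) = p x + 1 := rfl
  have htv : (t : ℕ) = p x - 1 := rfl
  have key : ∀ a b, catDist v p a b + catDist v p a b ≤
      catDist v (Function.update p x s) a b + catDist v (Function.update p x t) a b := by
    intro a b
    simp only [catDist]
    split_ifs with hab
    · rfl
    · by_cases ha : a = x
      · have hb : b ≠ x := fun h => hab (ha.trans h.symm)
        simp only [ha, Function.update_self, Function.update_of_ne hb]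
        omega
      · by_cases hb : b = x
        · simp only [hb, Function.update_self, Function.update_of_ne ha]
          omega
        · simp only [Function.update_of_ne ha, Function.update_of_ne hb]
          omega
  have strict : catDist v p x (v (p x)) + catDist v p x (v (p x)) <
      catDist v (Function.update p x s) x (v (p x))
        + catDist v (Function.update p x t) x (v (p x)) := by
    have hne : v (p x) ≠ x := fun h => hx ⟨_, h⟩
    simp only [catDist, if_neg hne.symm, Function.update_self, Function.update_of_ne hne, hp.spine]
    omega
  have hsum : catWiener v p + catWiener v p <
      catWiener v (Function.update p x s) + catWiener v (Function.update p x t) := by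
    simp only [catWiener, ← Finset.sum_add_distrib]
    refine Finset.sum_lt_sum
      (fun a _ => Finset.sum_le_sum fun b _ => key a b) ⟨x, Finset.mem_univ _, ?_⟩
    exact Finset.sum_lt_sum (fun b _ => key x b) ⟨v (p x), Finset.mem_univ _, strict⟩
  rcases lt_or_ge (catWiener v p) (catWiener v (Function.update p x s)) with h | h
  · exact ⟨_, isAttach_update hp hx (by omega) (by omega), h⟩
  · exact ⟨_, isAttach_update hp hx (t := t) (by omega) (by omega), by omega⟩

/-- Among the finitely many attachments one maximizes the Wiener index, and by `exists_better` it
hangs every leaf at `v 1` or `v (d - 1)`. -/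
lemma exists_extremal [Fintype V] [DecidableEq V] (hp : IsAttach v p) {x : V}
    (hx : x ∉ Set.range v) (h1 : 2 ≤ (p x : ℕ)) (h2 : (p x : ℕ) + 2 ≤ d) :
    ∃ q, IsAttach v q ∧ catWiener v p < catWiener v q ∧
      ∀ w, w ∉ Set.range v → (q w : ℕ) = 1 ∨ (q w : ℕ) = d - 1 := by
  have : Nonempty {q // IsAttach v q} := ⟨⟨p, hp⟩⟩
  obtain ⟨⟨q, hq⟩, hmax⟩ :=
    Finite.exists_max (fun q : {q // IsAttach v q} => catWiener v q.1)
  obtain ⟨p', hp', hlt⟩ := exists_better hp hx h1 h2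
  refine ⟨q, hq, hlt.trans_le (hmax ⟨p', hp'⟩), fun w hw => ?_⟩
  by_contra hcon
  have h3 := hq.pos w hw
  have h4 := hq.lt w hw
  obtain ⟨q', hq', hlt'⟩ := exists_better hq hw (by omega) (by omega)
  exact absurd (hmax ⟨q', hq'⟩) (not_le.mpr hlt')

/-! ### Caterpillars with all leaves at the ends are double brooms -/

lemma isDoubleBroom_catGraph [Finite V] (hv : Function.Injective v) (hp : IsAttach v p)
    (hd : 3 ≤ d)
    (hb : ∀ w, w ∉ Set.range v → (p w : ℕ) = 1 ∨ (p w : ℕ) = d - 1) :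
    IsDoubleBroom (catGraph v p) := by
  obtain ⟨a, ⟨α⟩⟩ := Finite.exists_equiv_fin {w // w ∉ Set.range v ∧ (p w : ℕ) = 1}
  obtain ⟨b, ⟨β⟩⟩ := Finite.exists_equiv_fin {w // w ∉ Set.range v ∧ (p w : ℕ) = d - 1}
  refine ⟨d, a + 1, b + 1, by omega, by omega, ⟨?_⟩⟩
  let e : Fin (d + 1) ⊕ Fin (a + 1 - 1) ⊕ Fin (b + 1 - 1) → V :=
    Sum.elim v (Sum.elim (fun k => (α.symm k).1) (fun k => (β.symm k).1))
  have hα : ∀ (k : Fin a) (i : Fin (d + 1)), v i ≠ (α.symm k).1 :=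
    fun k i h => (α.symm k).2.1 ⟨i, h⟩
  have hβ : ∀ (k : Fin b) (i : Fin (d + 1)), v i ≠ (β.symm k).1 :=
    fun k i h => (β.symm k).2.1 ⟨i, h⟩
  have hαβ : ∀ (k : Fin a) (l : Fin b), (α.symm k).1 ≠ (β.symm l).1 := by
    intro k l h
    have h1 := (α.symm k).2.2
    have h2 := (β.symm l).2.2
    rw [h] at h1
    omega
  have hinj : Function.Injective e := by
    refine hv.sumElim (Function.Injective.sumElim ?_ ?_ hαβ) ?_
    · exact Subtype.val_injective.comp α.symm.injective
    · exact Subtype.val_injective.comp β.symm.injective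
    · rintro i (k | k)
      · exact hα k i
      · exact hβ k i
  have hsurj : Function.Surjective e := by
    intro w
    by_cases hw : w ∈ Set.range v
    · obtain ⟨i, rfl⟩ := hw
      exact ⟨Sum.inl i, rfl⟩
    · rcases hb w hw with h | h
      · exact ⟨Sum.inr (Sum.inl (α ⟨w, hw, h⟩)), by simp [e]⟩
      · exact ⟨Sum.inr (Sum.inr (β ⟨w, hw, h⟩)), by simp [e]⟩
  have pα : ∀ k : Fin a, par v p (α.symm k).1 = v ⟨1, by omega⟩ := fun k => by
    rw [par_off (α.symm k).2.1]
    exact congrArg v (Fin.ext (α.symm k).2.2)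
  have pβ : ∀ k : Fin b, par v p (β.symm k).1 = v ⟨d - 1, by omega⟩ := fun k => by
    rw [par_off (β.symm k).2.1]
    exact congrArg v (Fin.ext (β.symm k).2.2)
  have hadj : ∀ s t, (catGraph v p).Adj (e s) (e t) ↔ (doubleBroom d (a + 1) (b + 1)).Adj s t := by
    intro s t
    rw [catGraph, doubleBroom, SimpleGraph.fromRel_adj, SimpleGraph.fromRel_adj, hinj.ne_iff]
    refine and_congr_right fun hne => ?_
    rcases s with i | k | k <;> rcases t with j | l | l
    · have hij : (i : ℕ) ≠ j := fun h => hne (congrArg _ (Fin.ext h))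
      simp only [e, Sum.elim_inl, par_spine hp, hv.eq_iff, Fin.ext_iff, broomRel]
      omega
    · simp only [e, Sum.elim_inl, Sum.elim_inr, par_spine hp, pα, hα, hv.eq_iff, Fin.ext_iff,
        broomRel, false_or]
      omega
    · simp only [e, Sum.elim_inl, Sum.elim_inr, par_spine hp, pβ, hβ, hv.eq_iff, Fin.ext_iff,
        broomRel, false_or]
      omega
    · simp only [e, Sum.elim_inl, Sum.elim_inr, par_spine hp, pα, hα, hv.eq_iff, Fin.ext_iff,
        broomRel, or_false]
      omega
    · simp only [e, Sum.elim_inl, Sum.elim_inr, pα, hα, broomRel]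
    · simp only [e, Sum.elim_inl, Sum.elim_inr, pα, pβ, hα, hβ, broomRel]
    · simp only [e, Sum.elim_inl, Sum.elim_inr, par_spine hp, pβ, hβ, hv.eq_iff, Fin.ext_iff,
        broomRel, or_false]
      omega
    · simp only [e, Sum.elim_inl, Sum.elim_inr, pα, pβ, hα, hβ, broomRel]
    · simp only [e, Sum.elim_inr, pβ, hβ, broomRel]
  exact (RelIso.mk (Equiv.ofBijective e ⟨hinj, hsurj⟩) (hadj _ _)).symm

/-! ### Mixing times of caterpillars -/

lemma sum_offSpine [Fintype V] (hv : Function.Injective v) :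
    ∑ w, offSpine v w + (d + 1) = Fintype.card V := by
  have h1 : ∀ w, offSpine v w + (if w ∈ Set.range v then 1 else 0) = 1 := fun w => by
    rw [offSpine]; split_ifs <;> rfl
  have h2 : ∑ w, (if w ∈ Set.range v then 1 else 0) = d + 1 := by
    rw [← Finset.card_filter, ← Fintype.card_subtype]
    exact (Set.card_range_of_injective hv).trans (Fintype.card_fin _)
  rw [← h2, ← Finset.sum_add_distrib, Finset.sum_congr rfl fun w _ => h1 w]
  simp

/-- The end vertices of the spine attain equality in `Tmix_le`. -/
lemma le_Tmix_catGraph [Fintype V] [DecidableEq V] (hv : Function.Injective v)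
    (hp : IsAttach v p) (hd : 1 ≤ d) (hm : 0 < numEdges (catGraph v p)) :
    wiener2 (catGraph v p) / numEdges (catGraph v p) - 1 / 2 - 2 * numEdges (catGraph v p) + d
      ≤ Tmix (catGraph v p) := by
  have hT := catGraph_isTree hv hp
  refine le_trans ?_ (le_Tmix (catGraph v p) (v 0) (v (Fin.last d)))
  rw [hit_sub_hitPi hT hm]
  have hdist : (catGraph v p).dist (v 0) (v (Fin.last d)) = d := by
    rw [catGraph_dist hv hp, catDist, if_neg, offSpine_spine, offSpine_spine, hp.spine, hp.spine]
    · simp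
    · intro h
      have := congrArg Fin.val (hv h)
      simp at this
      omega
  have hle : ∀ w, (catGraph v p).dist (v 0) w + (catGraph v p).dist (v (Fin.last d)) w
      ≤ d + 2 * offSpine v w := by
    intro w
    rw [catGraph_dist hv hp, catGraph_dist hv hp, catDist, catDist, offSpine_spine,
      offSpine_spine, hp.spine, hp.spine]
    have := (p w).2
    simp only [Fin.val_zero, Fin.val_last]
    split_ifs <;> omega
  have hs := Finset.sum_le_sum fun w (_ : w ∈ Finset.univ) => hle w
  rw [Finset.sum_add_distrib, Finset.sum_add_distrib, ← Finset.mul_sum, Finset.sum_const,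
    Finset.card_univ, smul_eq_mul] at hs
  have ho := sum_offSpine hv
  have hn := numEdges_add_one hT
  rw [← hn] at hs ho
  have hs' : transm (catGraph v p) (v 0) + transm (catGraph v p) (v (Fin.last d))
      ≤ ((numEdges (catGraph v p) : ℝ) + 1) * d + 2 * (∑ w, offSpine v w : ℕ) := by
    simp only [transm]
    exact_mod_cast hs
  have ho' : ((∑ w, offSpine v w : ℕ) : ℝ) + (d + 1) = numEdges (catGraph v p) + 1 := by
    exact_mod_cast ho
  rw [hdist]
  linarith

/-- A connected graph within distance one of a leaf-to-leaf path has an attachment; the leaves `v 0` and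
`v d` of the path carry no further vertex. -/
lemma exists_isAttach {G : SimpleGraph V} (hc : G.Connected) (hd : 1 ≤ d)
    (hspine : IsLeafPath G d v) (hcat : ∀ w, ∃ m, G.dist w (v m) ≤ 1) :
    ∃ p, IsAttach v p ∧ ∀ w, w ∉ Set.range v → G.Adj (v (p w)) w := by
  obtain ⟨hv, hs, h0, hl⟩ := hspine
  have hex : ∀ w, ∃ i, (∀ j, w = v j → i = j) ∧ (w ∉ Set.range v → G.Adj (v i) w) := by
    intro w
    by_cases hw : w ∈ Set.range v
    · obtain ⟨i, rfl⟩ := hw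
      exact ⟨i, fun j hj => hv hj, fun h => absurd ⟨i, rfl⟩ h⟩
    · obtain ⟨m, hm⟩ := hcat w
      have h1 : G.dist w (v m) ≠ 0 := fun h =>
        hw ⟨m, ((hc.dist_eq_zero_iff).mp h).symm⟩
      exact ⟨m, fun j hj => absurd ⟨j, hj.symm⟩ hw,
        fun _ => (SimpleGraph.dist_eq_one_iff_adj.mp (by omega)).symm⟩
  choose p hp1 hp2 using hex
  refine ⟨p, ⟨fun i => hp1 _ i rfl, fun w hw => ?_, fun w hw => ?_⟩, hp2⟩
  · by_contra hcon
    have h1 := hp2 w hw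
    have h2 : p w = 0 := Fin.ext (by simp only [Fin.val_zero]; omega)
    rw [h2] at h1
    exact hw ⟨_, h0.unique (hs 0 hd) h1⟩
  · by_contra hcon
    have h1 := hp2 w hw
    have h2 : p w = Fin.last d := Fin.ext (by have := (p w).2; simp only [Fin.val_last]; omega)
    have h3 := (hs (d - 1) (by omega)).symm
    have h4 : (⟨d - 1 + 1, by omega⟩ : Fin (d + 1)) = Fin.last d :=
      Fin.ext (Nat.sub_add_cancel hd)
    rw [h4] at h3
    rw [h2] at h1
    exact hw ⟨_, hl.unique h3 h1⟩

end Caterpillar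

/-- a caterpillar with at least two leaves off the spine adjacent to
`v_2, …, v_{d-2}` can be replaced by a caterpillar of the same order and diameter with a
strictly larger mixing time that is a double broom or a near double broom. -/
theorem stmt18 (n d : ℕ) {V : Type*} [Fintype V] [DecidableEq V]
    (G : SimpleGraph V) (htree : G.IsTree) (hcard : Fintype.card V = n)
    (hdiam : G.diam = d)
    (v : Fin (d+1) → V) (hspine : IsLeafPath G d v)
    (hcat : ∀ w, ∃ m, G.dist w (v m) ≤ 1)
    (x y : V) (hxy : x ≠ y)
    (hxP : ∀ m, x ≠ v m) (hyP : ∀ m, y ≠ v m)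
    (hxleaf : IsLeaf G x) (hyleaf : IsLeaf G y)
    (hx : ∃ i : Fin (d+1), 2 ≤ (i : ℕ) ∧ (i : ℕ) ≤ d - 2 ∧ G.Adj (v i) x)
    (hy : ∃ i : Fin (d+1), 2 ≤ (i : ℕ) ∧ (i : ℕ) ≤ d - 2 ∧ G.Adj (v i) y) :
    ∃ G' : SimpleGraph V, G'.IsTree ∧ IsCaterpillar G' ∧ G'.diam = d ∧
      Tmix G' > Tmix G ∧ (IsDoubleBroom G' ∨ IsNearDoubleBroom G') := by
  obtain ⟨i, hi1, hi2, hix⟩ := hx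
  have hd : 4 ≤ d := by omega
  have hv := hspine.1
  obtain ⟨p, hp, ho⟩ := exists_isAttach htree.1 (by omega) hspine hcat
  have hxr : x ∉ Set.range v := fun ⟨m, hm⟩ => hxP m hm.symm
  have hpx : p x = i := hv (hxleaf.unique (ho x hxr).symm hix.symm)
  obtain ⟨q, hq, hlt, hend⟩ := exists_extremal hp hxr (by omega) (by omega)
  have hT := catGraph_isTree hv hq
  refine ⟨catGraph v q, hT, catGraph_isCaterpillar hv hq (by omega), catGraph_diam hv hq, ?_,
    Or.inl (isDoubleBroom_catGraph hv hq (by omega) hend)⟩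
  have hm1 := numEdges_add_one htree
  have hm2 := numEdges_add_one hT
  have hmm : numEdges (catGraph v q) = numEdges G := by omega
  have hn := sum_offSpine hv
  have hm : 0 < numEdges G := by omega
  have h1 := le_Tmix_catGraph hv hq (by omega) (hmm ▸ hm)
  have := htree.1.nonempty
  have h2 := Tmix_le htree hm (d := d) fun u w => hdiam ▸
    SimpleGraph.dist_le_diam (SimpleGraph.connected_iff_ediam_ne_top.mp htree.1)
  rw [hmm, wiener2_catGraph hv hq] at h1
  have h3 : wiener2 G < (catWiener v q : ℝ) :=
    (wiener2_le htree.1 hp hspine.2.1 ho).trans_lt (by exact_mod_cast hlt)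
  have hmR : (0 : ℝ) < numEdges G := by exact_mod_cast hm
  have h4 : wiener2 G / numEdges G < (catWiener v q : ℝ) / numEdges G :=
    div_lt_div_of_pos_right h3 hmR
  linarith

end RWMix
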